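/- Let L be a profinite complete lattice. The following are equivalent: (i) L is join semidistributive; (ii) L is completely join semidistributive; (iii) for every cofinite congruence ≡ on L, the quotient lattice L/≡ is join semidistributive; (iv) every widely generated element of L has a canonical join representation; (v) every finitely generated element of L has a canonical join representation. -/

import Mathlib

/-- An element `x` of a poset is widely generated if every `y < x` lies below
some lower cover of `x`. -/
def WidelyGenerated {α : Type*} [PartialOrder α] (x : α) : Prop :=
  ∀ y : α, y < x → ∃ x' : α, x' ⋖ x ∧ y ≤ x'

/-- A canonical join representation of `x`: `⋁U = x`, no proper subset of `U`
has join `x` (irredundancy), and `U ≪ V` for every `V` with `⋁V = x`. -/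
def IsCanonicalJoinRep {L : Type*} [CompleteLattice L] (U : Set L) (x : L) : Prop :=
  sSup U = x ∧ (∀ U' : Set L, U' ⊂ U → sSup U' ≠ x) ∧
    ∀ V : Set L, sSup V = x → ∀ u ∈ U, ∃ v ∈ V, u ≤ v

/-- A complete lattice congruence: an equivalence relation such that whenever
`xᵢ ≡ yᵢ` for all `i`, also `⋁ᵢ xᵢ ≡ ⋁ᵢ yᵢ` and `⋀ᵢ xᵢ ≡ ⋀ᵢ yᵢ`
(families are encoded as sets of pairs). -/
def IsCompleteCongruence {L : Type*} [CompleteLattice L] (r : L → L → Prop) : Prop :=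
  Equivalence r ∧
    ∀ P : Set (L × L), (∀ p ∈ P, r p.1 p.2) →
      r (sSup (Prod.fst '' P)) (sSup (Prod.snd '' P)) ∧
      r (sInf (Prod.fst '' P)) (sInf (Prod.snd '' P))

/-- A relation has finitely many equivalence classes. -/
def HasFinitelyManyClasses {α : Type*} (r : α → α → Prop) : Prop :=
  (Set.range fun x : α => {y : α | r x y}).Finite

/-- A cofinite congruence: a complete lattice congruence with finitely many classes. -/
def IsCofiniteCongruence {L : Type*} [CompleteLattice L] (r : L → L → Prop) : Prop :=
  IsCompleteCongruence r ∧ HasFinitelyManyClasses r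

/-- A profinite complete lattice: distinct elements are separated by some
cofinite congruence. -/
def IsProfinite (L : Type*) [CompleteLattice L] : Prop :=
  ∀ x y : L, x ≠ y → ∃ r : L → L → Prop, IsCofiniteCongruence r ∧ ¬ r x y

/-- `x` is compact: whenever `x ≤ ⋁X`, already `x ≤ ⋁X'` for some finite `X' ⊆ X`. -/
def IsCompactElt {L : Type*} [CompleteLattice L] (x : L) : Prop :=
  ∀ X : Set L, x ≤ sSup X → ∃ X' ⊆ X, X'.Finite ∧ x ≤ sSup X'

/-- `x` is finitely generated: `x` is the minimum of its class for some
cofinite congruence, i.e. `x = π↓(x)`. -/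
def FinitelyGeneratedElt {L : Type*} [CompleteLattice L] (x : L) : Prop :=
  ∃ r : L → L → Prop, IsCofiniteCongruence r ∧ ∀ y : L, r x y → x ≤ y

/-- `x` is a complete join-irreducible: no set avoiding `x` has join `x`. -/
def CompleteJoinIrred {L : Type*} [CompleteLattice L] (x : L) : Prop :=
  ¬ ∃ X : Set L, x ∉ X ∧ sSup X = x

/-- Join semidistributivity: for finite nonempty `X`, if `x ∨ y = z` for all
`x ∈ X` then `(⋀X) ∨ y = z`. -/
def JoinSemidistrib (L : Type*) [CompleteLattice L] : Prop :=
  ∀ X : Set L, X.Finite → X.Nonempty → ∀ y z : L,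
    (∀ x ∈ X, x ⊔ y = z) → sInf X ⊔ y = z

/-- Complete join semidistributivity: for any nonempty `X`, if `x ∨ y = z` for all
`x ∈ X` then `(⋀X) ∨ y = z`. -/
def CompletelyJoinSemidistrib (L : Type*) [CompleteLattice L] : Prop :=
  ∀ X : Set L, X.Nonempty → ∀ y z : L,
    (∀ x ∈ X, x ⊔ y = z) → sInf X ⊔ y = z

/-- Join semidistributivity of the quotient lattice `L/≡`, expressed via
representatives: the join of classes `[x] ∨ [y]` is `[x ⊔ y]` and the (finite)
meet of classes `⋀[xᵢ]` is `[⋀ xᵢ]`. -/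
def QuotientJoinSemidistrib {L : Type*} [CompleteLattice L] (r : L → L → Prop) : Prop :=
  ∀ X : Set L, X.Finite → X.Nonempty → ∀ y z : L,
    (∀ x ∈ X, r (x ⊔ y) z) → r (sInf X ⊔ y) z

/-!
For a complete congruence, taking the least element `π↓(x)` of each class is a join homomorphism,
so `x ∨ y ≡ z` lifts to the equation `π↓(x) ∨ π↓(y) = π↓(z)` in `L`. Hence join semidistributivity
of the quotient only concerns equations in `L` whose right hand side is some `π↓(z)`, and it follows
from that of `L` or from the existence of a canonical join representation of every `π↓(z)`.
Conversely, modulo a cofinite congruence every meet is a finite meet, and cofinite congruences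
separate points, so join semidistributivity of all finite quotients is complete join
semidistributivity of `L`.

Under complete join semidistributivity, each lower cover `x'` of `x` comes with a least `j` such
that `j ∨ x' = x`, and `j ≤ v` or `v ≤ x'` for every `v ≤ x`. If `x` is widely generated, these `j`
form its canonical join representation. A finitely generated `x` is widely generated: each `w < x`
lies below the largest element of its class that is below `x`, and there are only finitely many of
those.
-/

theorem WidelyGenerated.of_finite_image {α : Type*} [PartialOrder α] {x : α} {f : α → α}
    (hfin : (f '' Set.Iio x).Finite) (hle : ∀ w < x, w ≤ f w) (hlt : ∀ w < x, f w < x) :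
    WidelyGenerated x := by
  intro y hyx
  obtain ⟨x', hyx', hmax⟩ := hfin.exists_le_maximal (Set.mem_image_of_mem f hyx)
  have hx'x : x' < x := by
    obtain ⟨w, hw, rfl⟩ := hmax.prop
    exact hlt w hw
  refine ⟨x', ⟨hx'x, fun u hx'u hux => ?_⟩, (hle y hyx).trans hyx'⟩
  exact hmax.not_gt (Set.mem_image_of_mem f hux) (hx'u.trans_le (hle u hux))

theorem HasFinitelyManyClasses.finite_range_comp {α β : Type*} {r : α → α → Prop}
    (h : HasFinitelyManyClasses r) (F : Set α → β) : (Set.range fun x => F {y | r x y}).Finite := by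
  rw [Set.range_comp' F]
  exact h.image F

/-- `π↓(x)`, the least element of the class of `x`, encoded as the meet of the class. -/
def piDown {L : Type*} [CompleteLattice L] (r : L → L → Prop) (x : L) : L :=
  sInf {y | r x y}

/-- `π↑(x)`, the greatest element of the class of `x`, encoded as the join of the class. -/
def piUp {L : Type*} [CompleteLattice L] (r : L → L → Prop) (x : L) : L :=
  sSup {y | r x y}

namespace IsCompleteCongruence

variable {L : Type*} [CompleteLattice L] {r : L → L → Prop}

protected theorem iSup (h : IsCompleteCongruence r) {ι : Sort*} {f g : ι → L}
    (hfg : ∀ i, r (f i) (g i)) : r (⨆ i, f i) (⨆ i, g i) := by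
  have hP := (h.2 (Set.range fun i => (f i, g i)) (Set.forall_mem_range.2 hfg)).1
  rwa [← Set.range_comp, ← Set.range_comp] at hP

protected theorem iInf (h : IsCompleteCongruence r) {ι : Sort*} {f g : ι → L}
    (hfg : ∀ i, r (f i) (g i)) : r (⨅ i, f i) (⨅ i, g i) := by
  have hP := (h.2 (Set.range fun i => (f i, g i)) (Set.forall_mem_range.2 hfg)).2
  rwa [← Set.range_comp, ← Set.range_comp] at hP

protected theorem sup (h : IsCompleteCongruence r) {a b c d : L} (hab : r a b) (hcd : r c d) :
    r (a ⊔ c) (b ⊔ d) := by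
  rw [sup_eq_iSup, sup_eq_iSup]
  exact h.iSup (Bool.forall_bool.2 ⟨hcd, hab⟩)

protected theorem inf (h : IsCompleteCongruence r) {a b c d : L} (hab : r a b) (hcd : r c d) :
    r (a ⊓ c) (b ⊓ d) := by
  rw [inf_eq_iInf, inf_eq_iInf]
  exact h.iInf (Bool.forall_bool.2 ⟨hcd, hab⟩)

theorem sInf_rel_sInf_image (h : IsCompleteCongruence r) {f : L → L} {X : Set L}
    (hf : ∀ x ∈ X, r x (f x)) : r (sInf X) (sInf (f '' X)) := by
  rw [sInf_eq_iInf', sInf_image']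
  exact h.iInf fun x => hf x x.2

theorem isLeast_piDown (h : IsCompleteCongruence r) (x : L) :
    IsLeast {y | r x y} (piDown r x) := by
  have : Nonempty {y | r x y} := ⟨x, h.1.refl x⟩
  have hx := h.iInf fun y : {y | r x y} => y.2
  rw [iInf_const, ← sInf_eq_iInf'] at hx
  exact ⟨hx, fun _ hy => sInf_le hy⟩

theorem isGreatest_piUp (h : IsCompleteCongruence r) (x : L) :
    IsGreatest {y | r x y} (piUp r x) := by
  have : Nonempty {y | r x y} := ⟨x, h.1.refl x⟩
  have hx := h.iSup fun y : {y | r x y} => y.2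
  rw [iSup_const, ← sSup_eq_iSup'] at hx
  exact ⟨hx, fun _ hy => le_sSup hy⟩

theorem rel_piDown (h : IsCompleteCongruence r) (x : L) : r x (piDown r x) :=
  (h.isLeast_piDown x).1

theorem piDown_eq_piDown_iff (h : IsCompleteCongruence r) {x y : L} :
    piDown r x = piDown r y ↔ r x y where
  mp hxy := h.1.trans (h.rel_piDown x) (hxy ▸ h.1.symm (h.rel_piDown y))
  mpr hxy := congrArg sInf (Set.ext fun _ => ⟨h.1.trans (h.1.symm hxy), h.1.trans hxy⟩)

theorem monotone_piDown (h : IsCompleteCongruence r) : Monotone (piDown r) := by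
  intro a b hab
  have ha : r a (a ⊓ piDown r b) := by
    simpa only [inf_eq_left.2 hab] using h.inf (h.1.refl a) (h.rel_piDown b)
  exact ((h.isLeast_piDown a).2 ha).trans inf_le_right

theorem piDown_sup (h : IsCompleteCongruence r) (x y : L) :
    piDown r (x ⊔ y) = piDown r x ⊔ piDown r y :=
  le_antisymm ((h.isLeast_piDown _).2 (h.sup (h.rel_piDown x) (h.rel_piDown y)))
    (h.monotone_piDown.le_map_sup x y)

theorem quotientJoinSemidistrib_of_piDown (h : IsCompleteCongruence r)
    (H : ∀ X : Set L, X.Finite → X.Nonempty → ∀ y z : L,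
      (∀ x ∈ X, x ⊔ y = piDown r z) → sInf X ⊔ y = piDown r z) :
    QuotientJoinSemidistrib r := by
  intro X hfin hne y z hxyz
  have hlift : sInf (piDown r '' X) ⊔ piDown r y = piDown r z :=
    H _ (hfin.image _) (hne.image _) _ _ <| Set.forall_mem_image.2 fun x hx => by
      rw [← h.piDown_sup, h.piDown_eq_piDown_iff.2 (hxyz x hx)]
  have hrel : r (sInf X ⊔ y) (piDown r z) :=
    hlift ▸ h.sup (h.sInf_rel_sInf_image fun x _ => h.rel_piDown x) (h.rel_piDown y)
  exact h.1.trans hrel (h.1.symm (h.rel_piDown z))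

end IsCompleteCongruence

section Cofinite

variable {L : Type*} [CompleteLattice L] {r : L → L → Prop}

theorem IsCofiniteCongruence.finitelyGeneratedElt_piDown (h : IsCofiniteCongruence r) (x : L) :
    FinitelyGeneratedElt (piDown r x) :=
  ⟨r, h, fun _ hy => (h.1.isLeast_piDown x).2 (h.1.1.trans (h.1.rel_piDown x) hy)⟩

theorem IsCofiniteCongruence.exists_finite_subset_sInf_rel (h : IsCofiniteCongruence r) {X : Set L}
    (hX : X.Nonempty) : ∃ X₀ ⊆ X, X₀.Finite ∧ X₀.Nonempty ∧ r (sInf X) (sInf X₀) := by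
  let rep : L → L := Function.invFunOn (piDown r) X ∘ piDown r
  have hmem : ∀ x ∈ X, rep x ∈ X := fun x hx =>
    Function.invFunOn_mem (Set.mem_image_of_mem _ hx)
  have hrel : ∀ x ∈ X, r x (rep x) := fun x hx =>
    h.1.piDown_eq_piDown_iff.1 (Function.invFunOn_eq (Set.mem_image_of_mem _ hx)).symm
  have hfin : (rep '' X).Finite :=
    (h.2.finite_range_comp (Function.invFunOn (piDown r) X ∘ sInf)).subset
      (Set.image_subset_range _ _)
  exact ⟨rep '' X, Set.image_subset_iff.2 hmem, hfin, hX.image rep, h.1.sInf_rel_sInf_image hrel⟩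

theorem QuotientJoinSemidistrib.sInf_sup_rel (h : QuotientJoinSemidistrib r)
    (hr : IsCofiniteCongruence r) {X : Set L} (hX : X.Nonempty) {y z : L}
    (hxyz : ∀ x ∈ X, r (x ⊔ y) z) : r (sInf X ⊔ y) z := by
  obtain ⟨X₀, hsub, hfin, hne, hrel⟩ := hr.exists_finite_subset_sInf_rel hX
  exact hr.1.1.trans (hr.1.sup hrel (hr.1.1.refl y))
    (h X₀ hfin hne y z fun x hx => hxyz x (hsub hx))

theorem FinitelyGeneratedElt.widelyGenerated {x : L} (hx : FinitelyGeneratedElt x) :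
    WidelyGenerated x := by
  obtain ⟨r, hr, hmin⟩ := hx
  have hle : ∀ w < x, w ≤ x ⊓ piUp r w := fun w hwx =>
    le_inf hwx.le ((hr.1.isGreatest_piUp w).2 (hr.1.1.refl w))
  have hrel : ∀ w < x, r w (x ⊓ piUp r w) := fun w hwx => by
    simpa only [inf_eq_right.2 hwx.le] using
      hr.1.inf (hr.1.1.refl x) (hr.1.isGreatest_piUp w).1
  refine .of_finite_image ((hr.2.finite_range_comp fun c => x ⊓ sSup c).subset
    (Set.image_subset_range _ _)) hle fun w hwx => inf_le_left.lt_of_ne fun heq => ?_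
  exact hwx.not_ge (hmin w (hr.1.1.symm (heq ▸ hrel w hwx)))

end Cofinite

section CoverJoinands

variable {α : Type*} [SemilatticeSup α] {j x x' y : α}

/-- The elements that are least with the property of joining some lower cover of `x` up to `x`: the
candidates for the canonical joinands of `x`. -/
def coverJoinands (x : α) : Set α :=
  {j | ∃ x', x' ⋖ x ∧ IsLeast {w | w ⊔ x' = x} j}

theorem le_iff_not_le_of_isLeast_sup_eq (hcov : x' ⋖ x) (hj : IsLeast {w | w ⊔ x' = x} j)
    (hy : y ≤ x) : j ≤ y ↔ ¬ y ≤ x' := by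
  constructor
  · intro hjy hyx'
    have hx : j ⊔ x' = x := hj.1
    exact hcov.ne ((sup_eq_right.2 (hjy.trans hyx')).symm.trans hx)
  · intro hyx'
    have hx : y ⊔ x' = x :=
      (hcov.eq_or_eq le_sup_right (sup_le hy hcov.le)).resolve_left (mt sup_eq_right.1 hyx')
    exact hj.2 hx

theorem isAntichain_coverJoinands (x : α) : IsAntichain (· ≤ ·) (coverJoinands x) := by
  rintro j₁ ⟨x₁, hcov₁, hj₁⟩ j₂ ⟨x₂, hcov₂, hj₂⟩ hne hle
  have hx₁₂ : ¬ x₁ ≤ x₂ := fun h₁₂ => by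
    obtain rfl : x₂ = x₁ := (hcov₁.eq_or_eq h₁₂ hcov₂.le).resolve_right hcov₂.ne
    exact hne (hj₁.unique hj₂)
  have hj₂x₁ : j₂ ≤ x₁ := (le_iff_not_le_of_isLeast_sup_eq hcov₂ hj₂ hcov₁.le).2 hx₁₂
  exact (le_iff_not_le_of_isLeast_sup_eq hcov₁ hj₁ hcov₁.le).1 (hle.trans hj₂x₁) le_rfl

end CoverJoinands

section CanonicalJoinRep

variable {L : Type*} [CompleteLattice L] {U X : Set L} {j x y z : L}

theorem IsCanonicalJoinRep.of_isAntichain (hsup : sSup U = x) (hanti : IsAntichain (· ≤ ·) U)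
    (href : ∀ V : Set L, sSup V = x → ∀ u ∈ U, ∃ v ∈ V, u ≤ v) : IsCanonicalJoinRep U x := by
  refine ⟨hsup, fun U' hU' hsup' => ?_, href⟩
  obtain ⟨u, hu, hnot⟩ := Set.exists_of_ssubset hU'
  obtain ⟨u', hu', hle⟩ := href U' hsup' u hu
  exact hnot (hanti.eq hu (hU'.subset hu') hle ▸ hu')

theorem IsCanonicalJoinRep.sInf_sup_eq (h : IsCanonicalJoinRep U z) (hX : X.Nonempty)
    (hxyz : ∀ x ∈ X, x ⊔ y = z) : sInf X ⊔ y = z := by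
  obtain ⟨hsup, -, href⟩ := h
  apply le_antisymm
  · obtain ⟨x, hx⟩ := hX
    exact (sup_le_sup_right (sInf_le hx) y).trans_eq (hxyz x hx)
  · rw [← hsup]
    refine sSup_le fun u hu => ?_
    by_cases huy : u ≤ y
    · exact le_sup_of_le_right huy
    · refine le_sup_of_le_left (le_sInf fun x hx => ?_)
      obtain ⟨v, rfl | rfl, huv⟩ := href {x, y} (by rw [sSup_pair, hxyz x hx]) u hu
      · exact huv
      · exact absurd huv huy

theorem exists_le_of_mem_coverJoinands (hj : j ∈ coverJoinands x) (hX : sSup X = x) :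
    ∃ v ∈ X, j ≤ v := by
  obtain ⟨x', hcov, hj⟩ := hj
  have hnle : ¬ sSup X ≤ x' := hX ▸ hcov.lt.not_ge
  obtain ⟨v, hv, hvx'⟩ : ∃ v ∈ X, ¬ v ≤ x' := by
    simpa only [sSup_le_iff, not_forall, exists_prop] using hnle
  exact ⟨v, hv, (le_iff_not_le_of_isLeast_sup_eq hcov hj (hX ▸ le_sSup hv)).2 hvx'⟩

theorem sSup_coverJoinands (hx : WidelyGenerated x)
    (hleast : ∀ x', x' ⋖ x → ∃ j, IsLeast {w | w ⊔ x' = x} j) : sSup (coverJoinands x) = x := by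
  have hle : sSup (coverJoinands x) ≤ x := by
    refine sSup_le ?_
    rintro j ⟨x', -, hj⟩
    exact le_sup_left.trans_eq hj.1
  by_contra hne
  obtain ⟨x', hcov, hx'⟩ := hx _ (hle.lt_of_ne hne)
  obtain ⟨j, hj⟩ := hleast x' hcov
  have hjx' : j ≤ x' := (le_sSup (show j ∈ coverJoinands x from ⟨x', hcov, hj⟩)).trans hx'
  exact (le_iff_not_le_of_isLeast_sup_eq hcov hj hcov.le).1 hjx' le_rfl

theorem isCanonicalJoinRep_coverJoinands (hx : WidelyGenerated x)
    (hleast : ∀ x', x' ⋖ x → ∃ j, IsLeast {w | w ⊔ x' = x} j) :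
    IsCanonicalJoinRep (coverJoinands x) x :=
  .of_isAntichain (sSup_coverJoinands hx hleast) (isAntichain_coverJoinands x)
    fun _ hV _ hj => exists_le_of_mem_coverJoinands hj hV

end CanonicalJoinRep

section Semidistributivity

variable {L : Type*} [CompleteLattice L]

theorem CompletelyJoinSemidistrib.joinSemidistrib (h : CompletelyJoinSemidistrib L) :
    JoinSemidistrib L :=
  fun X _ hne => h X hne

theorem CompletelyJoinSemidistrib.isLeast_sInf_sup_eq (h : CompletelyJoinSemidistrib L) {x y : L}
    (hyx : y ≤ x) : IsLeast {w | w ⊔ y = x} (sInf {w | w ⊔ y = x}) :=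
  ⟨h {w | w ⊔ y = x} ⟨x, sup_eq_left.2 hyx⟩ y x fun _ hw => hw, fun _ hw => sInf_le hw⟩

theorem CompletelyJoinSemidistrib.exists_isCanonicalJoinRep (h : CompletelyJoinSemidistrib L)
    {x : L} (hx : WidelyGenerated x) : ∃ U : Set L, IsCanonicalJoinRep U x :=
  ⟨_, isCanonicalJoinRep_coverJoinands hx fun _ hcov => ⟨_, h.isLeast_sInf_sup_eq hcov.le⟩⟩

theorem CompletelyJoinSemidistrib.of_quotient (hL : IsProfinite L)
    (h : ∀ r : L → L → Prop, IsCofiniteCongruence r → QuotientJoinSemidistrib r) :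
    CompletelyJoinSemidistrib L := by
  intro X hne y z hxyz
  by_contra hcon
  obtain ⟨r, hr, hnr⟩ := hL _ _ hcon
  exact hnr ((h r hr).sInf_sup_rel hr hne fun x hx => by
    rw [hxyz x hx]
    exact hr.1.1.refl z)

theorem JoinSemidistrib.quotient (h : JoinSemidistrib L) {r : L → L → Prop}
    (hr : IsCompleteCongruence r) : QuotientJoinSemidistrib r :=
  hr.quotientJoinSemidistrib_of_piDown fun X hfin hne y z => h X hfin hne y (piDown r z)

theorem QuotientJoinSemidistrib.of_isCanonicalJoinRep_piDown {r : L → L → Prop}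
    (hr : IsCompleteCongruence r) (h : ∀ z, ∃ U : Set L, IsCanonicalJoinRep U (piDown r z)) :
    QuotientJoinSemidistrib r :=
  hr.quotientJoinSemidistrib_of_piDown fun _ _ hne _ z hxyz =>
    (h z).elim fun _ hU => hU.sInf_sup_eq hne hxyz

end Semidistributivity

/-- For a profinite complete lattice `L`, the following are equivalent:
(i) `L` is join semidistributive; (ii) `L` is completely join semidistributive; (iii) for
every cofinite congruence `≡` on `L`, the quotient lattice `L/≡` is join semidistributive;
(iv) every widely generated element of `L` has a canonical join representation; (v) every
finitely generated element of `L` has a canonical join representation. -/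
theorem extended_weak_order_stmt18 {L : Type*} [CompleteLattice L]
    (hL : IsProfinite L) :
    (JoinSemidistrib L ↔ CompletelyJoinSemidistrib L) ∧
    (JoinSemidistrib L ↔
      ∀ r : L → L → Prop, IsCofiniteCongruence r → QuotientJoinSemidistrib r) ∧
    (JoinSemidistrib L ↔
      ∀ x : L, WidelyGenerated x → ∃ U : Set L, IsCanonicalJoinRep U x) ∧
    (JoinSemidistrib L ↔
      ∀ x : L, FinitelyGeneratedElt x → ∃ U : Set L, IsCanonicalJoinRep U x) := by
  have tfae : List.TFAE [JoinSemidistrib L, CompletelyJoinSemidistrib L,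
      ∀ r : L → L → Prop, IsCofiniteCongruence r → QuotientJoinSemidistrib r,
      ∀ x : L, WidelyGenerated x → ∃ U : Set L, IsCanonicalJoinRep U x,
      ∀ x : L, FinitelyGeneratedElt x → ∃ U : Set L, IsCanonicalJoinRep U x] := by
    tfae_have 2 → 1 := CompletelyJoinSemidistrib.joinSemidistrib
    tfae_have 1 → 3 := fun h _ hr => h.quotient hr.1
    tfae_have 3 → 2 := CompletelyJoinSemidistrib.of_quotient hL
    tfae_have 2 → 4 := fun h _ hx => h.exists_isCanonicalJoinRep hx
    tfae_have 4 → 5 := fun h x hx => h x hx.widelyGenerated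
    tfae_have 5 → 3 := fun h _ hr =>
      .of_isCanonicalJoinRep_piDown hr.1 fun z => h _ (hr.finitelyGeneratedElt_piDown z)
    tfae_finish
  exact ⟨tfae.out 0 1, tfae.out 0 2, tfae.out 0 3, tfae.out 0 4⟩
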